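/- Let $R \subseteq \mathbb{Z}$ be a finite set containing the coefficients of a trigonometric polynomial $f$ (so $\hat{f}(r) \in R$ for all $r$), and suppose there exists a non-zero trigonometric polynomial $P$ of degree at most $k$ with $|\int_0^{2\pi} P f| \geq \varepsilon \int_0^{2\pi} |P f|$ for some $\varepsilon > 0$. If additionally the space of $(2k+1)$-windows of $(\widehat{Sf}(r))_{r \in [N,M]}$ has full dimension $2k+1$ for some integer interval $[N,M]$, where $S$ is any fixed trigonometric polynomial with integer coefficients, then it is not the case that $|\widehat{PSf}(r)| < I \cdot ((2k+1) M(R) G)^{-1}$ for all $r \in [N, M]$, where $I = \frac{1}{2\pi}|\int P f|$, $M(R') \leq 2^{\deg S}M(R)$ bounds the coefficients of $Sf$, and $G = M(R')^{2k}(2k+1)^{k+1/2}$. -/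

import Mathlib

instance : Fact (0 < 2 * Real.pi) := ⟨by positivity⟩

/-!
Among the windows of the Fourier coefficients of `S f` choose `2 k + 1` linearly independent ones.
They are the rows of an integer matrix `A` of nonzero determinant, so `1 ≤ |det A|`, and applying
`A` to the coefficients of `P` in reverse order gives Fourier coefficients of `P S f` at points of
`[N, M]`. Cramer's rule, with Hadamard's inequality for the numerators, bounds every coefficient of
`P` by `G` times the largest of these values. Since `I` is the modulus of the zeroth Fourier
coefficient of `P f`, a sum of `2 k + 1` products of a coefficient of `P` and one of `f`, it is at
most `(2 k + 1) M(R) G` times that value.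
-/

open Module Matrix MeasureTheory AddCircle

section Determinant

variable {𝕜 ι : Type*} [RCLike 𝕜] [Fintype ι] [DecidableEq ι]

theorem norm_orthonormalBasis_det_le_prod_norm {E : Type*} [NormedAddCommGroup E]
    [InnerProductSpace 𝕜 E] (b : OrthonormalBasis ι 𝕜 E) (v : ι → E) :
    ‖b.toBasis.det v‖ ≤ ∏ i, ‖v i‖ := by
  -- `v` is triangular in its Gram–Schmidt basis, and the change of basis to `b` is unitary.
  let _ : LinearOrder ι := LinearOrder.lift' (Fintype.equivFin ι) (Fintype.equivFin ι).injective
  let _ : LocallyFiniteOrderBot ι := .ofIic ι (fun i ↦ {j | j ≤ i}) (by simp)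
  have : FiniteDimensional 𝕜 E := b.toBasis.finiteDimensional_of_finite
  let a := InnerProductSpace.gramSchmidtOrthonormalBasis (finrank_eq_card_basis b.toBasis) v
  have hba : b.toBasis.det v = b.toBasis.det a * a.toBasis.det v :=
    DFunLike.congr_fun (b.toBasis.det.eq_smul_basis_det a.toBasis) v
  rw [hba, norm_mul, b.det_to_matrix_orthonormalBasis a, one_mul,
    InnerProductSpace.gramSchmidtOrthonormalBasis_det, norm_prod]
  gcongr with i
  simpa using norm_inner_le_norm (𝕜 := 𝕜) (a i) (v i)

theorem norm_det_le_sqrt_card_pow_mul_prod {A : Matrix ι ι 𝕜} {c : ι → ℝ}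
    (hA : ∀ i j, ‖A i j‖ ≤ c j) :
    ‖A.det‖ ≤ √(Fintype.card ι) ^ Fintype.card ι * ∏ j, c j := by
  let v (j : ι) : EuclideanSpace 𝕜 ι := WithLp.toLp 2 (Aᵀ j)
  have hv (j : ι) : ‖v j‖ ≤ √(Fintype.card ι) * c j := by
    have hc : 0 ≤ c j := (norm_nonneg _).trans (hA j j)
    calc ‖v j‖ = √(∑ i, ‖A i j‖ ^ 2) := EuclideanSpace.norm_eq _
      _ ≤ √(∑ _i : ι, c j ^ 2) := by gcongr with i; exact hA i j
      _ = √(Fintype.card ι) * c j := by simp [Real.sqrt_sq hc]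
  calc ‖A.det‖ = ‖(EuclideanSpace.basisFun ι 𝕜).toBasis.det v‖ := rfl
    _ ≤ ∏ j, ‖v j‖ := norm_orthonormalBasis_det_le_prod_norm _ v
    _ ≤ ∏ j, √(Fintype.card ι) * c j := by gcongr with j; exact hv j
    _ = _ := by rw [Finset.prod_mul_distrib, Finset.prod_const, Finset.card_univ]

theorem norm_det_mul_norm_apply_le_of_norm_mulVec_le {A : Matrix ι ι 𝕜} {x : ι → 𝕜} {m β : ℝ}
    (hA : ∀ i j, ‖A i j‖ ≤ m) (hβ : ∀ i, ‖(A *ᵥ x) i‖ ≤ β) (i : ι) :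
    ‖A.det‖ * ‖x i‖ ≤
      √(Fintype.card ι) ^ Fintype.card ι * m ^ (Fintype.card ι - 1) * β := by
  have hcramer : (A.updateCol i (A *ᵥ x)).det = A.det * x i := by
    rw [← cramer_apply, cramer_eq_adjugate_mulVec, mulVec_mulVec, adjugate_mul, smul_mulVec,
      one_mulVec, Pi.smul_apply, smul_eq_mul]
  have hentry (p q : ι) :
      ‖A.updateCol i (A *ᵥ x) p q‖ ≤ Function.update (fun _ ↦ m) i β q := by
    obtain rfl | hq := eq_or_ne q i
    · simpa using hβ p
    · simpa [hq] using hA p q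
  calc ‖A.det‖ * ‖x i‖ = ‖(A.updateCol i (A *ᵥ x)).det‖ := by rw [hcramer, norm_mul]
    _ ≤ √(Fintype.card ι) ^ Fintype.card ι * ∏ q, Function.update (fun _ ↦ m) i β q :=
      norm_det_le_sqrt_card_pow_mul_prod hentry
    _ = _ := by
      rw [Finset.prod_update_of_mem (Finset.mem_univ i), Finset.prod_const,
        Finset.card_sdiff_of_subset (Finset.subset_univ _), Finset.card_univ,
        Finset.card_singleton, mul_comm β, mul_assoc]

theorem one_le_norm_det_of_intCast_entries {A : Matrix ι ι 𝕜} (hdet : A.det ≠ 0)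
    (hA : ∀ i j, ∃ z : ℤ, A i j = z) : 1 ≤ ‖A.det‖ := by
  choose Z hZ using hA
  have hAZ : A.det = ((of Z).det : ℤ) := by
    rw [Int.cast_det]
    congr 1
    ext i j
    exact hZ i j
  rw [hAZ, Int.cast_ne_zero] at hdet
  calc (1 : ℝ) ≤ |((of Z).det : ℝ)| := by exact_mod_cast Int.one_le_abs hdet
    _ = ‖A.det‖ := by rw [hAZ, norm_intCast_eq_abs_mul_norm_one, norm_one, mul_one, Int.cast_abs]

end Determinant

theorem exists_linearIndependent_of_span_eq_top {K V ι : Type*} [DivisionRing K]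
    [AddCommGroup V] [Module K V] (b : Basis ι K V) {s : Set V} (hs : Submodule.span K s = ⊤) :
    ∃ v : ι → V, LinearIndependent K v ∧ ∀ i, v i ∈ s :=
  let e := b.indexEquiv (Basis.ofSpan hs.ge)
  ⟨Basis.ofSpan hs.ge ∘ e, (Basis.ofSpan hs.ge).linearIndependent.comp e e.injective,
    fun _ ↦ Basis.ofSpan_subset hs.ge (Set.mem_range_self _)⟩

theorem exists_mem_forall_norm_le_mul_norm_dotProduct {𝕜 ι : Type*} [RCLike 𝕜] [Fintype ι]
    [Nonempty ι] {V : Set (ι → 𝕜)} {m : ℝ} (hspan : Submodule.span 𝕜 V = ⊤)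
    (hint : ∀ v ∈ V, ∀ i, ∃ z : ℤ, v i = z) (hm : ∀ v ∈ V, ∀ i, ‖v i‖ ≤ m) (x : ι → 𝕜) :
    ∃ v ∈ V, ∀ i, ‖x i‖ ≤
      √(Fintype.card ι) ^ Fintype.card ι * m ^ (Fintype.card ι - 1) * ‖v ⬝ᵥ x‖ := by
  classical
  obtain ⟨A, hindep, hA⟩ : ∃ A : Matrix ι ι 𝕜, LinearIndependent 𝕜 A.row ∧ ∀ i, A i ∈ V :=
    exists_linearIndependent_of_span_eq_top (Pi.basisFun 𝕜 ι) hspan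
  have hdet : A.det ≠ 0 :=
    ((isUnit_iff_isUnit_det A).1 (linearIndependent_rows_iff_isUnit.1 hindep)).ne_zero
  obtain ⟨p, hp⟩ := Finite.exists_max fun i ↦ ‖(A *ᵥ x) i‖
  refine ⟨A p, hA p, fun i ↦ ?_⟩
  calc ‖x i‖ ≤ ‖A.det‖ * ‖x i‖ := le_mul_of_one_le_left (norm_nonneg _) <|
        one_le_norm_det_of_intCast_entries hdet fun i ↦ hint _ (hA i)
    _ ≤ _ := norm_det_mul_norm_apply_le_of_norm_mulVec_le (fun i ↦ hm _ (hA i)) hp i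

section Fourier

variable {T : ℝ}

/-- The trigonometric polynomial with frequencies in `s` and coefficients `c`, on a circle of
arbitrary circumference `T` and bundled as a continuous map. -/
noncomputable def trigPoly (s : Finset ℤ) (c : ℤ → ℂ) : C(AddCircle T, ℂ) :=
  ∑ r ∈ s, c r • fourier r

theorem eq_trigPoly {f : AddCircle T → ℂ} {s : Finset ℤ} {c : ℤ → ℂ}
    (hf : ∀ x, f x = ∑ r ∈ s, c r * fourier r x) : f = trigPoly s c := by
  ext x
  simp [hf, trigPoly]

variable [Fact (0 < T)]

theorem integrable_haarAddCircle_of_continuous {E : Type*} [NormedAddCommGroup E]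
    {f : AddCircle T → E} (hf : Continuous f) : Integrable f haarAddCircle :=
  hf.integrable_of_hasCompactSupport (.of_compactSpace f)

theorem fourierCoeff_fourier_smul {E : Type*} [NormedAddCommGroup E] [NormedSpace ℂ E]
    (g : AddCircle T → E) (j r : ℤ) :
    fourierCoeff (fun x ↦ fourier j x • g x) r = fourierCoeff g (r - j) := by
  unfold fourierCoeff
  congr with x
  rw [smul_smul, ← fourier_add, neg_sub, neg_add_eq_sub]

theorem fourierCoeff_trigPoly_mul {g : AddCircle T → ℂ} (hg : Integrable g haarAddCircle)
    (s : Finset ℤ) (c : ℤ → ℂ) (r : ℤ) :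
    fourierCoeff (fun x ↦ trigPoly s c x * g x) r = ∑ j ∈ s, c j * fourierCoeff g (r - j) := by
  have hsum : (fun x ↦ trigPoly s c x * g x) = ∑ j ∈ s, c j • fun x ↦ fourier j x • g x := by
    ext x
    simp [trigPoly, Finset.sum_mul, mul_assoc]
  rw [hsum, fourierCoeff.sum _ _ fun j _ ↦ (hg.fourier_smul j).smul (c j), Finset.sum_apply]
  exact Finset.sum_congr rfl fun j _ ↦ by
    rw [fourierCoeff.const_smul, fourierCoeff_fourier_smul, smul_eq_mul]

theorem norm_fourierCoeff_trigPoly_mul_le {g : AddCircle T → ℂ}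
    (hg : Integrable g haarAddCircle) {s : Finset ℤ} {c : ℤ → ℂ} {r : ℤ} {B C : ℝ}
    (hc : ∀ j ∈ s, ‖c j‖ ≤ C) (hB : ∀ j ∈ s, ‖fourierCoeff g (r - j)‖ ≤ B) :
    ‖fourierCoeff (fun x ↦ trigPoly s c x * g x) r‖ ≤ s.card * (C * B) := by
  rw [fourierCoeff_trigPoly_mul hg, ← nsmul_eq_mul]
  refine (norm_sum_le_of_le s fun j hj ↦ ?_).trans_eq (Finset.sum_const _)
  rw [norm_mul]
  gcongr
  exacts [(norm_nonneg _).trans (hc j hj), hc j hj, hB j hj]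

theorem exists_intCast_eq_fourierCoeff_trigPoly_mul {g : AddCircle T → ℂ}
    (hg : Integrable g haarAddCircle) (hint : ∀ r, ∃ z : ℤ, fourierCoeff g r = z)
    (s : Finset ℤ) (c : ℤ → ℤ) (r : ℤ) :
    ∃ z : ℤ, fourierCoeff (fun x ↦ trigPoly s (fun j ↦ (c j : ℂ)) x * g x) r = z := by
  choose z hz using hint
  refine ⟨∑ j ∈ s, c j * z (r - j), ?_⟩
  simp [fourierCoeff_trigPoly_mul hg, hz]

theorem norm_fourierCoeff_zero {E : Type*} [NormedAddCommGroup E] [NormedSpace ℂ E]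
    (g : AddCircle T → E) :
    ‖fourierCoeff g 0‖ = 1 / T * ‖∫ θ in (0 : ℝ)..T, g θ‖ := by
  have hT : 0 < T := Fact.out
  simp [fourierCoeff_eq_intervalIntegral g 0 0, norm_smul, abs_of_pos hT]

end Fourier

/-- The `(2k+1)`-windows of the sequence `(u r)` for `r ∈ [N, M]`: its consecutive subvectors of
length `2k+1`. The full-rank hypothesis says that they span. -/
def windows {α : Type*} (u : ℤ → α) (k : ℕ) (N M : ℤ) : Set (Fin (2 * k + 1) → α) :=
  {w | ∃ r : ℤ, N ≤ r ∧ r + 2 * (k : ℤ) ≤ M ∧ w = fun j : Fin (2 * k + 1) ↦ u (r + ((j : ℕ) : ℤ))}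

theorem exists_apply_eq_of_mem_windows {α : Type*} {u : ℤ → α} {k : ℕ} {N M : ℤ}
    {w : Fin (2 * k + 1) → α} (hw : w ∈ windows u k N M) (j : Fin (2 * k + 1)) :
    ∃ r ∈ Set.Icc N M, w j = u r := by
  obtain ⟨r, hN, hM, rfl⟩ := hw
  have := j.isLt
  exact ⟨r + (j : ℕ), ⟨by lia, by lia⟩, rfl⟩

theorem window_dotProduct_eq_sum_Icc {α : Type*} [NonUnitalCommSemiring α] (u c : ℤ → α) (k : ℕ)
    (r : ℤ) :
    ((fun j : Fin (2 * k + 1) ↦ u (r + ((j : ℕ) : ℤ))) ⬝ᵥ fun j ↦ c (k - ((j : ℕ) : ℤ))) =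
      ∑ j ∈ Finset.Icc (-(k : ℤ)) k, c j * u (r + k - j) := by
  refine Finset.sum_bij (fun j _ ↦ (k : ℤ) - (j : ℕ)) (fun j _ ↦ ?_) (fun i _ j _ h ↦ ?_)
    (fun q hq ↦ ?_) (fun j _ ↦ ?_)
  · have := j.isLt
    rw [Finset.mem_Icc]
    lia
  · ext
    lia
  · rw [Finset.mem_Icc] at hq
    exact ⟨⟨(k - q).toNat, by lia⟩, Finset.mem_univ _, by dsimp only; lia⟩
  · rw [mul_comm, add_sub_assoc, sub_sub_cancel]

section FullRank

variable {T : ℝ} [Fact (0 < T)] {f g : AddCircle T → ℂ} {k : ℕ} {N M : ℤ} {m : ℝ}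

theorem exists_norm_le_mul_norm_fourierCoeff_trigPoly_mul (hg : Integrable g haarAddCircle)
    (hint : ∀ r ∈ Set.Icc N M, ∃ z : ℤ, fourierCoeff g r = z)
    (hrank : Submodule.span ℂ (windows (fourierCoeff g) k N M) = ⊤)
    (hm : ∀ r ∈ Set.Icc N M, ‖fourierCoeff g r‖ ≤ m) (c : ℤ → ℂ) :
    ∃ r ∈ Set.Icc N M, ∀ j ∈ Finset.Icc (-(k : ℤ)) k,
      ‖c j‖ ≤ m ^ (2 * k) * (2 * (k : ℝ) + 1) ^ ((k : ℝ) + 1 / 2) *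
        ‖fourierCoeff (fun x ↦ trigPoly (Finset.Icc (-(k : ℤ)) k) c x * g x) r‖ := by
  obtain ⟨w, ⟨r, hN, hM, rfl⟩, hw⟩ := exists_mem_forall_norm_le_mul_norm_dotProduct hrank
    (fun w hw j ↦ have ⟨r, hr, hwr⟩ := exists_apply_eq_of_mem_windows hw j; hwr ▸ hint r hr)
    (fun w hw j ↦ have ⟨r, hr, hwr⟩ := exists_apply_eq_of_mem_windows hw j; hwr ▸ hm r hr)
    (fun j ↦ c (k - ((j : ℕ) : ℤ)))
  have hpow : √(2 * k + 1 : ℝ) ^ (2 * k + 1) = (2 * (k : ℝ) + 1) ^ ((k : ℝ) + 1 / 2) := by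
    rw [← Real.rpow_natCast, ← Real.rpow_div_two_eq_sqrt _ (by positivity)]
    push_cast
    ring_nf
  refine ⟨r + k, ⟨by lia, by lia⟩, fun j hj ↦ ?_⟩
  rw [Finset.mem_Icc] at hj
  have hcj := hw ⟨(k - j).toNat, by lia⟩
  rw [window_dotProduct_eq_sum_Icc, ← fourierCoeff_trigPoly_mul hg, Fintype.card_fin,
    Int.toNat_of_nonneg (by lia), sub_sub_cancel, add_tsub_cancel_right] at hcj
  push_cast at hcj
  rwa [hpow, mul_comm (_ ^ _) (m ^ _)] at hcj

/-- An arbitrary integrable `g` takes the place of `S f`. -/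
theorem stmt19_general (hf : Integrable f haarAddCircle) (hg : Integrable g haarAddCircle)
    (hint : ∀ r ∈ Set.Icc N M, ∃ z : ℤ, fourierCoeff g r = z)
    (hrank : Submodule.span ℂ (windows (fourierCoeff g) k N M) = ⊤)
    (hm : ∀ r ∈ Set.Icc N M, ‖fourierCoeff g r‖ ≤ m) {B : ℝ}
    (hB : ∀ r ∈ Set.Icc (-(k : ℤ)) k, ‖fourierCoeff f r‖ ≤ B) (c : ℤ → ℂ) :
    ∃ r ∈ Set.Icc N M,
      1 / T * ‖∫ θ in (0 : ℝ)..T,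
          trigPoly (Finset.Icc (-(k : ℤ)) k) c (θ : AddCircle T) * f θ‖ /
          ((2 * (k : ℝ) + 1) * B * (m ^ (2 * k) * (2 * (k : ℝ) + 1) ^ ((k : ℝ) + 1 / 2))) ≤
        ‖fourierCoeff (fun x ↦ trigPoly (Finset.Icc (-(k : ℤ)) k) c x * g x) r‖ := by
  obtain ⟨r, hr, hc⟩ := exists_norm_le_mul_norm_fourierCoeff_trigPoly_mul hg hint hrank hm c
  have hB0 : 0 ≤ B := (norm_nonneg _).trans (hB 0 (by simp))
  have hpow : 0 ≤ m ^ (2 * k) := (even_two_mul k).pow_nonneg m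
  refine ⟨r, hr, div_le_of_le_mul₀ (by positivity) (norm_nonneg _) ?_⟩
  calc _ = ‖fourierCoeff (fun x ↦ trigPoly (Finset.Icc (-(k : ℤ)) k) c x * f x) 0‖ :=
        (norm_fourierCoeff_zero _).symm
    _ ≤ _ := norm_fourierCoeff_trigPoly_mul_le hf hc fun j hj ↦ hB _ (by grind)
    _ = _ := by
      rw [Int.card_Icc, show ((k : ℤ) + 1 - -(k : ℤ)).toNat = 2 * k + 1 by lia]
      push_cast
      ring

end FullRank

theorem stmt19 (k : ℕ) (hk : 1 ≤ k) (ε : ℝ) (hε : 0 < ε)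
    (R : Finset ℤ)
    (f : AddCircle (2 * Real.pi) → ℂ) (sf : Finset ℤ) (cf : ℤ → ℤ)
    (hf : ∀ x, f x = ∑ r ∈ sf, (cf r : ℂ) * fourier r x)
    (hfR : ∀ r : ℤ, ∃ z ∈ R, fourierCoeff f r = (z : ℂ))
    (P : AddCircle (2 * Real.pi) → ℂ) (cP : ℤ → ℂ)
    (hP : ∀ x, P x = ∑ r ∈ Finset.Icc (-(k : ℤ)) (k : ℤ), cP r * fourier r x)
    (hPne : P ≠ 0)
    (hcor : ε * ∫ θ in (0 : ℝ)..(2 * Real.pi),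
          ‖P (θ : AddCircle (2 * Real.pi)) * f (θ : AddCircle (2 * Real.pi))‖
        ≤ ‖∫ θ in (0 : ℝ)..(2 * Real.pi),
          P (θ : AddCircle (2 * Real.pi)) * f (θ : AddCircle (2 * Real.pi))‖)
    (S : AddCircle (2 * Real.pi) → ℂ) (sS : Finset ℤ) (cS : ℤ → ℤ)
    (hS : ∀ x, S x = ∑ r ∈ sS, (cS r : ℂ) * fourier r x)
    (N M : ℤ) (hNM : N + 2 * (k : ℤ) ≤ M)
    (hrank : Submodule.span ℂ
        {w : Fin (2 * k + 1) → ℂ | ∃ r : ℤ, N ≤ r ∧ r + 2 * (k : ℤ) ≤ M ∧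
          w = fun j : Fin (2 * k + 1) =>
            fourierCoeff (fun x => S x * f x) (r + ((j : ℕ) : ℤ))} = ⊤)
    (MR : ℝ) (hMR : ∀ z ∈ R, |(z : ℝ)| ≤ MR)
    (M' : ℝ) (hM' : ∀ r : ℤ, ‖fourierCoeff (fun x => S x * f x) r‖ ≤ M')
    (I : ℝ)
    (hI : I = (1 / (2 * Real.pi)) * ‖∫ θ in (0 : ℝ)..(2 * Real.pi),
          P (θ : AddCircle (2 * Real.pi)) * f (θ : AddCircle (2 * Real.pi))‖)
    (G : ℝ) (hG : G = M' ^ (2 * k) * (2 * (k : ℝ) + 1) ^ ((k : ℝ) + 1 / 2)) :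
    ¬ ∀ r : ℤ, N ≤ r → r ≤ M →
      ‖fourierCoeff (fun x => P x * (S x * f x)) r‖ < I / ((2 * (k : ℝ) + 1) * MR * G) := by
  obtain rfl := eq_trigPoly hP
  obtain rfl := eq_trigPoly hS
  have hfc : Continuous f := eq_trigPoly hf ▸ (trigPoly sf _).continuous
  have hfi := integrable_haarAddCircle_of_continuous hfc
  have hB (r : ℤ) : ‖fourierCoeff f r‖ ≤ MR := by
    obtain ⟨z, hzR, hz⟩ := hfR r
    simpa [hz] using hMR z hzR
  obtain ⟨r, ⟨hN, hM⟩, hr⟩ := stmt19_general hfi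
    (integrable_haarAddCircle_of_continuous ((trigPoly sS _).continuous.mul hfc))
    (fun r _ ↦ exists_intCast_eq_fourierCoeff_trigPoly_mul hfi
      (fun r ↦ (hfR r).imp fun _ ↦ And.right) sS cS r)
    hrank (fun r _ ↦ hM' r) (fun r _ ↦ hB r) cP
  subst hI hG
  exact fun h ↦ (h r hN hM).not_ge hr
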